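/- arXiv:1501.00506 — 5 statements merged into one kernel-verified Lean document; each statement's English description precedes it below -/
import Mathlib

section
/- Assume F is infinite. Let 𝔤 = {X ∈ M_{4n+2}(F) : Xᵀ J + J X = 0} (the Lie algebra of SO(J)), and for each integer l let 𝔤_l = {X ∈ 𝔤 : H(t) X H(t)^{−1} = t^l X for all t ∈ F^×}. Then 𝔤 is the internal direct sum of the subspaces 𝔤_l for −(4n−2) ≤ l ≤ 4n−2; in particular every X ∈ 𝔤 decomposes uniquely as a sum of H-eigenvectors. -/
/-!
Write `a k` for the exponent `hexp n k`.  Conjugation by `H(t)` multiplies the `(i, j)` entry of a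
matrix by `t ^ (a i - a j)`.  Over an infinite field distinct integer powers are distinct characters
of `Fˣ` (`zpow_character_trivial`), so the eigenmatrices of weight `l` are exactly the matrices
supported on the entries with `a i - a j = l` (`entry_eq_zero_of_eigen`).  Hence the only possible
decomposition of `X` cuts it into the pieces `weightPart n X l`; only `|l| ≤ 4n - 2` occur because
`|a k| ≤ 2n - 1`.

The pieces stay in `𝔤` because `H(t)` preserves the form: `J i j ≠ 0` forces `a i + a j = 0`
(`hexp_add_eq_zero`).  The `(i, j)` entry of `Xᵀ J + J X` therefore involves only entries of `X` of
weight `-(a i + a j)`, so the relation defining `𝔤` holds weight by weight (`weightPart_mem`).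
-/

open Matrix

/-- The Gram matrix `J` of the (4n+2)-dimensional quadratic space. -/
def Jmat (F : Type*) [Field F] (n : ℕ) (δ : F) :
    Matrix (Fin (4 * n + 2)) (Fin (4 * n + 2)) F :=
  Matrix.of fun i j =>
    if i.val = 2 * n then (if j = i then (1 : F) else 0)
    else if i.val = 2 * n + 1 then (if j = i then δ else 0)
    else if i.val + j.val = 4 * n + 1 then 1 else 0

/-- The exponent of `t` at the `k`-th diagonal entry of `H(t)`. -/
def hexp (n : ℕ) (k : Fin (4 * n + 2)) : ℤ :=
  if k.val < 2 * n then (2 * n : ℤ) - 1 - 2 * (k.val : ℤ)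
  else if k.val < 2 * n + 2 then 0
  else (6 * n : ℤ) + 3 - 2 * (k.val : ℤ)

/-- The diagonal matrix `H(t)`. -/
def Hmat {F : Type*} [Field F] (n : ℕ) (t : Fˣ) :
    Matrix (Fin (4 * n + 2)) (Fin (4 * n + 2)) F :=
  Matrix.diagonal fun k => ((t ^ hexp n k : Fˣ) : F)

/-- The part of `X` of weight `l`: the entries `(i, j)` with `hexp n i - hexp n j = l` are kept and
the others are replaced by `0`. -/
def weightPart {F : Type*} [Field F] (n : ℕ)
    (X : Matrix (Fin (4 * n + 2)) (Fin (4 * n + 2)) F) (l : ℤ) :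
    Matrix (Fin (4 * n + 2)) (Fin (4 * n + 2)) F :=
  Matrix.of fun i j => if hexp n i - hexp n j = l then X i j else 0

/-- If `m ≠ 0`, every unit would be a root of unity of order dividing `|m|`, and a field has only
finitely many of those. -/
lemma zpow_character_trivial {F : Type*} [Field F] [Infinite F] (m : ℤ)
    (h : ∀ t : Fˣ, t ^ m = 1) : m = 0 := by
  by_contra hm
  have hk : m.natAbs ≠ 0 := Int.natAbs_ne_zero.mpr hm
  have : NeZero m.natAbs := ⟨hk⟩
  have hall : ∀ t : Fˣ, t ∈ rootsOfUnity m.natAbs F := fun t => by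
    rw [mem_rootsOfUnity]
    exact pow_natAbs_eq_one.mpr (h t)
  have hfin : Finite Fˣ :=
    Finite.of_injective (fun t : Fˣ => (⟨t, hall t⟩ : rootsOfUnity m.natAbs F))
      fun s t hst => congrArg Subtype.val hst
  have hfin0 : Finite {x : F // x ≠ 0} := Finite.of_equiv Fˣ unitsEquivNeZero
  have hset : ({0}ᶜ : Set F).Finite := Set.finite_coe_iff.mp hfin0
  exact (Set.finite_singleton (0 : F)).infinite_compl hset

lemma hexp_add_eq_zero {F : Type*} [Field F] (n : ℕ) (δ : F) (i j : Fin (4 * n + 2))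
    (h : Jmat F n δ i j ≠ 0) : hexp n i + hexp n j = 0 := by
  have hi := i.isLt
  have hj := j.isLt
  simp only [Jmat, Matrix.of_apply] at h
  unfold hexp
  split_ifs at h with h1 h2 h3 h4 h5
  · subst h2; split_ifs <;> omega
  · exact absurd rfl h
  · subst h4; split_ifs <;> omega
  · exact absurd rfl h
  · split_ifs <;> omega
  · exact absurd rfl h

lemma hexp_sub_mem (n : ℕ) (hn : 1 ≤ n) (i j : Fin (4 * n + 2)) :
    hexp n i - hexp n j ∈ Finset.Icc (-(4 * (n : ℤ) - 2)) (4 * (n : ℤ) - 2) := by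
  have hi := i.isLt
  have hj := j.isLt
  rw [Finset.mem_Icc]
  unfold hexp
  split_ifs <;> omega

lemma Hmat_conj_apply {F : Type*} [Field F] (n : ℕ) (t : Fˣ)
    (Y : Matrix (Fin (4 * n + 2)) (Fin (4 * n + 2)) F) (i j : Fin (4 * n + 2)) :
    (Hmat n t * Y * Hmat n t⁻¹) i j = ((t ^ (hexp n i - hexp n j) : Fˣ) : F) * Y i j := by
  simp only [Hmat, Matrix.mul_diagonal, Matrix.diagonal_mul,
    _root_.zpow_sub, _root_.inv_zpow, Units.val_mul]
  ring

lemma entry_eq_zero_of_eigen {F : Type*} [Field F] [Infinite F] (n : ℕ) (l : ℤ)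
    (Y : Matrix (Fin (4 * n + 2)) (Fin (4 * n + 2)) F)
    (hY : ∀ t : Fˣ, Hmat n t * Y * Hmat n t⁻¹ = ((t ^ l : Fˣ) : F) • Y)
    (i j : Fin (4 * n + 2)) (hl : hexp n i - hexp n j ≠ l) : Y i j = 0 := by
  by_contra hne
  refine hl (sub_eq_zero.mp (zpow_character_trivial (F := F) _ fun t => ?_))
  have h := congrFun (congrFun (hY t) i) j
  rw [Hmat_conj_apply, Matrix.smul_apply, smul_eq_mul] at h
  rw [_root_.zpow_sub, Units.ext (mul_right_cancel₀ hne h), mul_inv_cancel]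

lemma weightPart_mem {F : Type*} [Field F] (n : ℕ) (δ : F)
    (X : Matrix (Fin (4 * n + 2)) (Fin (4 * n + 2)) F)
    (hX : Xᵀ * Jmat F n δ + Jmat F n δ * X = 0) (l : ℤ) :
    (weightPart n X l)ᵀ * Jmat F n δ + Jmat F n δ * weightPart n X l = 0 := by
  ext i j
  have hij := congrFun (congrFun hX i) j
  simp only [Matrix.add_apply, Matrix.mul_apply, Matrix.transpose_apply, Matrix.zero_apply]
    at hij ⊢
  have e1 : ∀ k, weightPart n X l k i * Jmat F n δ k j =
      if -(hexp n i + hexp n j) = l then X k i * Jmat F n δ k j else 0 := fun k => by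
    by_cases hJ : Jmat F n δ k j = 0
    · simp [hJ]
    · have hk := hexp_add_eq_zero n δ k j hJ
      have : hexp n k - hexp n i = -(hexp n i + hexp n j) := by linarith
      simp [weightPart, this]
  have e2 : ∀ k, Jmat F n δ i k * weightPart n X l k j =
      if -(hexp n i + hexp n j) = l then Jmat F n δ i k * X k j else 0 := fun k => by
    by_cases hJ : Jmat F n δ i k = 0
    · simp [hJ]
    · have hk := hexp_add_eq_zero n δ i k hJ
      have : hexp n k - hexp n j = -(hexp n i + hexp n j) := by linarith
      simp [weightPart, this]
  simp only [e1, e2]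
  split_ifs
  · exact hij
  · simp

/-- Assume `F` infinite.  Let `𝔤 = {X : Xᵀ J + J X = 0}` and, for
`l : ℤ`, `𝔤_l = {X ∈ 𝔤 : H(t) X H(t)⁻¹ = tˡ • X for all t}`.  Then every
`X ∈ 𝔤` decomposes uniquely as a sum of elements of the `𝔤_l` for
`-(4n-2) ≤ l ≤ 4n-2`; i.e. `𝔤` is the internal direct sum of the `𝔤_l`. -/
theorem statement2 (F : Type*) [Field F] (hF : Infinite F) (h2 : (2 : F) ≠ 0)
    (n : ℕ) (hn : 1 ≤ n) (δ : F) (hδ : δ ≠ 0) (hδsq : ∀ x : F, x ^ 2 ≠ -δ) :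
    ∀ X : Matrix (Fin (4 * n + 2)) (Fin (4 * n + 2)) F,
      Xᵀ * Jmat F n δ + Jmat F n δ * X = 0 →
      ∃! c : ℤ → Matrix (Fin (4 * n + 2)) (Fin (4 * n + 2)) F,
        (∀ l : ℤ, (c l)ᵀ * Jmat F n δ + Jmat F n δ * (c l) = 0) ∧
        (∀ l : ℤ, ∀ t : Fˣ,
          Hmat n t * c l * Hmat n t⁻¹ = ((t ^ l : Fˣ) : F) • c l) ∧
        (∀ l : ℤ, l ∉ Finset.Icc (-(4 * (n : ℤ) - 2)) (4 * (n : ℤ) - 2) → c l = 0) ∧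
        X = ∑ l ∈ Finset.Icc (-(4 * (n : ℤ) - 2)) (4 * (n : ℤ) - 2), c l := by
  intro X hX
  refine ⟨weightPart n X, ⟨weightPart_mem n δ X hX, fun l t => ?_, fun l hl => ?_, ?_⟩, ?_⟩
  · ext i j
    rw [Hmat_conj_apply, Matrix.smul_apply, smul_eq_mul]
    by_cases h : hexp n i - hexp n j = l
    · rw [h]
    · simp [weightPart, h]
  · ext i j
    have h : hexp n i - hexp n j ≠ l := fun h => hl (h ▸ hexp_sub_mem n hn i j)
    simp [weightPart, h]
  · ext i j
    rw [Matrix.sum_apply]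
    simp only [weightPart, Matrix.of_apply]
    rw [Finset.sum_ite_eq, if_pos (hexp_sub_mem n hn i j)]
  · rintro c ⟨-, hc, -, hsum⟩
    funext l
    ext i j
    by_cases h : hexp n i - hexp n j = l
    · have hs := congrFun (congrFun hsum i) j
      -- All summands but the one of weight `hexp n i - hexp n j` vanish at `(i, j)`.
      rw [Matrix.sum_apply, Finset.sum_eq_single_of_mem _ (hexp_sub_mem n hn i j)
        fun m _ hm => entry_eq_zero_of_eigen n m (c m) (hc m) i j hm.symm] at hs
      subst h
      simp [weightPart, hs]
    · rw [entry_eq_zero_of_eigen n l (c l) (hc l) i j h]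
      simp [weightPart, h]
end

section
/- Fix 1 ≤ ℓ < 2n and α ∈ F^×, and set y_α = e_{2n} − (α/2)·e_{−2n} ∈ W_ℓ. Then ⟨y_α, y_α⟩ = −α (so y_α is anisotropic), and the restriction of ⟨·,·⟩ to the (4n−2ℓ+1)-dimensional subspace y_α^⊥ ∩ W_ℓ is isometric to the symmetric bilinear space on F^{4n−2ℓ+1} with Gram matrix [[0, 0, w_{2n−ℓ−1}], [0, J_{δ,α}, 0], [w_{2n−ℓ−1}, 0, 0]], where J_{δ,α} = diag(1, δ, α) and w_r is the r×r anti-diagonal matrix of 1's. -/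
/-!
The orthogonal complement of `y_α = e₂ₙ - (α/2)·e₋₂ₙ` inside the hyperbolic plane spanned by
`e₂ₙ, e₋₂ₙ` is the line through `z_α = e₂ₙ + (α/2)·e₋₂ₙ`, and `⟨z_α, z_α⟩ = α`. Hence
`y_α^⊥ ∩ W_ℓ` has basis
`e_{ℓ+1}, …, e_{2n-1}, e₀⁽¹⁾, e₀⁽²⁾, z_α, e_{-(2n-1)}, …, e_{-(ℓ+1)}`,
whose Gram matrix is the one required. The isometry `perpMap` sends the standard basis to this
basis. All computations go through `bform_eq`, which expands the form on `V` into
its hyperbolic pairs and the two anisotropic coordinates, and `small_eq`, its analogue for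
the smaller Gram matrix.
-/

open Matrix

/-- The symmetric bilinear form `⟨·,·⟩` on `V = F^{4n+2}`. -/
def bform {F : Type*} [Field F] (n : ℕ) (δ : F) (x y : Fin (4 * n + 2) → F) : F :=
  x ⬝ᵥ (Jmat F n δ *ᵥ y)

/-- The subspace `W_ℓ = span(e_{ℓ+1}, …, e_{2n}, e₀⁽¹⁾, e₀⁽²⁾, e₋₂ₙ, …, e₋₍ℓ₊₁₎)`,
consisting of vectors supported on 0-based coordinates `ℓ ≤ k ≤ 4n+1-ℓ`. -/
def Wset (F : Type*) [Field F] (n ℓ : ℕ) : Set (Fin (4 * n + 2) → F) :=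
  {x | ∀ k : Fin (4 * n + 2), (k.val < ℓ ∨ 4 * n + 1 - ℓ < k.val) → x k = 0}

/-- The anisotropic vector `y_α = e₂ₙ - (α/2)·e₋₂ₙ` (coordinates `2n-1` and
`2n+2` in 0-based indexing). -/
def yvec (F : Type*) [Field F] (n : ℕ) (α : F) : Fin (4 * n + 2) → F :=
  fun k => if k.val = 2 * n - 1 then 1 else if k.val = 2 * n + 2 then -(α / 2) else 0

/-- The Gram matrix `[[0, 0, w_m], [0, J_{δ,α}, 0], [w_m, 0, 0]]` of size
`2m+3`, with `J_{δ,α} = diag(1, δ, α)`. -/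
def Jsmall (F : Type*) [Field F] (m : ℕ) (δ α : F) :
    Matrix (Fin (2 * m + 3)) (Fin (2 * m + 3)) F :=
  Matrix.of fun a b =>
    if a.val = m then (if b = a then (1 : F) else 0)
    else if a.val = m + 1 then (if b = a then δ else 0)
    else if a.val = m + 2 then (if b = a then α else 0)
    else if a.val + b.val = 2 * m + 2 then 1 else 0

/-! ### Coordinate expansions of the two forms -/

/-- Extension by zero of a vector to a function on `ℕ`. -/
def natExt {F : Type*} [Field F] {N : ℕ} (x : Fin N → F) (k : ℕ) : F :=
  if h : k < N then x ⟨k, h⟩ else 0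

lemma natExt_val {F : Type*} [Field F] {N : ℕ} (x : Fin N → F) (k : Fin N) :
    natExt x k.val = x k := by
  simp [natExt]

lemma natExt_of_lt {F : Type*} [Field F] {N : ℕ} (x : Fin N → F) {k : ℕ} (h : k < N) :
    natExt x k = x ⟨k, h⟩ := by
  simp [natExt, h]

lemma dotProduct_eq_range {F : Type*} [Field F] {N : ℕ} (x z : Fin N → F) :
    x ⬝ᵥ z = ∑ k ∈ Finset.range N, natExt x k * natExt z k := by
  rw [dotProduct, ← Fin.sum_univ_eq_sum_range (fun k => natExt x k * natExt z k) N]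
  simp [natExt_val]

lemma natExt_Jmat_mulVec {F : Type*} [Field F] (n : ℕ) (δ : F) (y : Fin (4 * n + 2) → F)
    {k : ℕ} (hk : k < 4 * n + 2) :
    natExt (Jmat F n δ *ᵥ y) k =
      if k = 2 * n then natExt y k
      else if k = 2 * n + 1 then δ * natExt y k
      else natExt y (4 * n + 1 - k) := by
  rw [natExt_of_lt _ hk]
  simp only [mulVec, dotProduct, Jmat, Matrix.of_apply]
  split_ifs with h1 h2
  · simp [natExt_of_lt _ hk]
  · simp [natExt_of_lt _ hk]
  · have hk' : 4 * n + 1 - k < 4 * n + 2 := by omega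
    rw [natExt_of_lt _ hk', Finset.sum_eq_single ⟨4 * n + 1 - k, hk'⟩]
    · rw [if_pos (by simp only; omega), one_mul]
    · intro b _ hb
      rw [if_neg, zero_mul]
      intro h
      exact hb (Fin.ext (by simp only; omega))
    · simp

lemma natExt_Jsmall_mulVec {F : Type*} [Field F] (m : ℕ) (δ α : F)
    (v : Fin (2 * m + 3) → F) {k : ℕ} (hk : k < 2 * m + 3) :
    natExt (Jsmall F m δ α *ᵥ v) k =
      if k = m then natExt v k
      else if k = m + 1 then δ * natExt v k
      else if k = m + 2 then α * natExt v k
      else natExt v (2 * m + 2 - k) := by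
  rw [natExt_of_lt _ hk]
  simp only [mulVec, dotProduct, Jsmall, Matrix.of_apply]
  split_ifs with h1 h2 h3
  · simp [natExt_of_lt _ hk]
  · simp [natExt_of_lt _ hk]
  · simp [natExt_of_lt _ hk]
  · have hk' : 2 * m + 2 - k < 2 * m + 3 := by omega
    rw [natExt_of_lt _ hk', Finset.sum_eq_single ⟨2 * m + 2 - k, hk'⟩]
    · rw [if_pos (by simp only; omega), one_mul]
    · intro b _ hb
      rw [if_neg, zero_mul]
      intro h
      exact hb (Fin.ext (by simp only; omega))
    · simp

/-- The form on `V`, with the pair `e₂ₙ, e₋₂ₙ` (which carries `y_α`) isolated from the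
other hyperbolic pairs. Here `p = 2n - 1`. -/
lemma bform_eq {F : Type*} [Field F] (n : ℕ) (δ : F) (p : ℕ) (hp : p + 1 = 2 * n)
    (x y : Fin (4 * n + 2) → F) :
    bform n δ x y =
      (∑ i ∈ Finset.range p, natExt x i * natExt y (4 * n + 1 - i)) +
      (natExt x p * natExt y (p + 3) + natExt x (p + 1) * natExt y (p + 1) +
        δ * (natExt x (p + 2) * natExt y (p + 2)) + natExt x (p + 3) * natExt y p) +
      ∑ i ∈ Finset.range p, natExt x (p + 4 + i) * natExt y (p - 1 - i) := by
  rw [bform, dotProduct_eq_range, congrArg Finset.range (show 4 * n + 2 = p + 4 + p by omega),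
    Finset.sum_range_add, Finset.sum_range_add]
  congr 1
  · congr 1
    · refine Finset.sum_congr rfl fun i hi => ?_
      rw [Finset.mem_range] at hi
      rw [natExt_Jmat_mulVec n δ y (by omega), if_neg (by omega), if_neg (by omega)]
    · simp only [Finset.sum_range_succ, Finset.sum_range_zero, zero_add, add_zero]
      rw [natExt_Jmat_mulVec n δ y (k := p) (by omega),
        natExt_Jmat_mulVec n δ y (k := p + 1) (by omega),
        natExt_Jmat_mulVec n δ y (k := p + 2) (by omega),
        natExt_Jmat_mulVec n δ y (k := p + 3) (by omega),
        if_neg (by omega), if_neg (by omega), if_pos (by omega), if_neg (by omega),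
        if_pos (by omega), if_neg (by omega), if_neg (by omega),
        show 4 * n + 1 - p = p + 3 by omega, show 4 * n + 1 - (p + 3) = p by omega]
      ring
  · refine Finset.sum_congr rfl fun i hi => ?_
    rw [Finset.mem_range] at hi
    rw [natExt_Jmat_mulVec n δ y (by omega), if_neg (by omega), if_neg (by omega),
      show 4 * n + 1 - (p + 4 + i) = p - 1 - i by omega]

lemma small_eq {F : Type*} [Field F] (m : ℕ) (δ α : F) (u v : Fin (2 * m + 3) → F) :
    u ⬝ᵥ (Jsmall F m δ α *ᵥ v) =
      (∑ i ∈ Finset.range m, natExt u i * natExt v (2 * m + 2 - i)) +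
      (natExt u m * natExt v m + δ * (natExt u (m + 1) * natExt v (m + 1)) +
        α * (natExt u (m + 2) * natExt v (m + 2))) +
      ∑ i ∈ Finset.range m, natExt u (m + 3 + i) * natExt v (m - 1 - i) := by
  rw [dotProduct_eq_range, congrArg Finset.range (show 2 * m + 3 = m + 3 + m by omega),
    Finset.sum_range_add, Finset.sum_range_add]
  congr 1
  · congr 1
    · refine Finset.sum_congr rfl fun i hi => ?_
      rw [Finset.mem_range] at hi
      rw [natExt_Jsmall_mulVec m δ α v (by omega), if_neg (by omega), if_neg (by omega),
        if_neg (by omega)]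
    · simp only [Finset.sum_range_succ, Finset.sum_range_zero, zero_add, add_zero]
      rw [natExt_Jsmall_mulVec m δ α v (k := m) (by omega),
        natExt_Jsmall_mulVec m δ α v (k := m + 1) (by omega),
        natExt_Jsmall_mulVec m δ α v (k := m + 2) (by omega),
        if_pos rfl, if_neg (by omega), if_pos rfl, if_neg (by omega), if_neg (by omega),
        if_pos rfl]
      ring
  · refine Finset.sum_congr rfl fun i hi => ?_
    rw [Finset.mem_range] at hi
    rw [natExt_Jsmall_mulVec m δ α v (by omega), if_neg (by omega), if_neg (by omega),
      if_neg (by omega), show 2 * m + 2 - (m + 3 + i) = m - 1 - i by omega]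

/-! ### Pairing with `y_α` -/

lemma natExt_yvec {F : Type*} [Field F] (n : ℕ) (α : F) {k : ℕ} (hk : k < 4 * n + 2) :
    natExt (yvec F n α) k =
      if k = 2 * n - 1 then 1 else if k = 2 * n + 2 then -(α / 2) else 0 := by
  rw [natExt_of_lt _ hk]
  rfl

lemma bform_yvec {F : Type*} [Field F] (n : ℕ) (δ α : F) (p : ℕ) (hp : p + 1 = 2 * n)
    (x : Fin (4 * n + 2) → F) :
    bform n δ (yvec F n α) x = natExt x (p + 3) - α / 2 * natExt x p := by
  rw [bform_eq n δ p hp, Finset.sum_eq_zero, Finset.sum_eq_zero,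
    natExt_yvec n α (k := p) (by omega), natExt_yvec n α (k := p + 1) (by omega),
    natExt_yvec n α (k := p + 2) (by omega), natExt_yvec n α (k := p + 3) (by omega),
    if_pos (by omega), if_neg (by omega), if_neg (by omega), if_neg (by omega),
    if_neg (by omega), if_neg (by omega), if_pos (by omega)]
  · ring
  · intro i hi
    rw [Finset.mem_range] at hi
    rw [natExt_yvec n α (by omega), if_neg (by omega), if_neg (by omega), zero_mul]
  · intro i hi
    rw [Finset.mem_range] at hi
    rw [natExt_yvec n α (by omega), if_neg (by omega), if_neg (by omega), zero_mul]

/-! ### The isometry and its coordinates -/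

/-- The linear map sending the standard basis of `F^{2m+3}` to
`e_{ℓ+1}, …, e_{2n-1}, e₀⁽¹⁾, e₀⁽²⁾, z_α, e_{-(2n-1)}, …, e_{-(ℓ+1)}` with
`z_α = e₂ₙ + (α/2)·e₋₂ₙ`; it has this meaning when `ℓ + m + 1 = 2n`. The definition gives the
coordinates of the image, the coordinates of `e₂ₙ` and `e₋₂ₙ` being `ℓ + m` and `ℓ + m + 3`. -/
def perpMap {F : Type*} [Field F] (n ℓ m : ℕ) (α : F) :
    (Fin (2 * m + 3) → F) →ₗ[F] (Fin (4 * n + 2) → F) where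
  toFun u k :=
    if k.val < ℓ then 0
    else if k.val < ℓ + m then natExt u (k.val - ℓ)
    else if k.val = ℓ + m then natExt u (m + 2)
    else if k.val = ℓ + m + 1 then natExt u m
    else if k.val = ℓ + m + 2 then natExt u (m + 1)
    else if k.val = ℓ + m + 3 then α / 2 * natExt u (m + 2)
    -- beyond the last coordinate of `W_ℓ` this is zero because `natExt` is
    else natExt u (k.val - ℓ - 1)
  map_add' u v := by
    have h : ∀ k, natExt (u + v) k = natExt u k + natExt v k := by
      intro k
      simp only [natExt]
      split_ifs <;> simp
    funext k
    simp only [h, Pi.add_apply]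
    split_ifs <;> ring
  map_smul' c u := by
    have h : ∀ k, natExt (c • u) k = c * natExt u k := by
      intro k
      simp only [natExt]
      split_ifs <;> simp
    funext k
    simp only [h, Pi.smul_apply, smul_eq_mul, RingHom.id_apply]
    split_ifs <;> ring

lemma natExt_perpMap {F : Type*} [Field F] (n ℓ m : ℕ) (α : F) (u : Fin (2 * m + 3) → F)
    {k : ℕ} (hk : k < 4 * n + 2) :
    natExt (perpMap n ℓ m α u) k =
      if k < ℓ then 0
      else if k < ℓ + m then natExt u (k - ℓ)
      else if k = ℓ + m then natExt u (m + 2)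
      else if k = ℓ + m + 1 then natExt u m
      else if k = ℓ + m + 2 then natExt u (m + 1)
      else if k = ℓ + m + 3 then α / 2 * natExt u (m + 2)
      else natExt u (k - ℓ - 1) := by
  rw [natExt_of_lt _ hk]
  rfl

lemma perpMap_low {F : Type*} [Field F] {n ℓ m : ℕ} (hm : ℓ + m + 1 = 2 * n)
    (α : F) (u : Fin (2 * m + 3) → F) {i : ℕ}
    (hi : i < ℓ) :
    natExt (perpMap n ℓ m α u) i = 0 := by
  rw [natExt_perpMap n ℓ m α u (by omega)]
  rw [if_pos hi]

lemma perpMap_left {F : Type*} [Field F] {n ℓ m : ℕ} (hm : ℓ + m + 1 = 2 * n)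
    (α : F) (u : Fin (2 * m + 3) → F) {i : ℕ}
    (hi : i < m) :
    natExt (perpMap n ℓ m α u) (ℓ + i) = natExt u i := by
  rw [natExt_perpMap n ℓ m α u (by omega)]
  rw [if_neg (by omega), if_pos (by omega), show ℓ + i - ℓ = i by omega]

lemma perpMap_e {F : Type*} [Field F] {n ℓ m : ℕ} (hm : ℓ + m + 1 = 2 * n)
    (α : F) (u : Fin (2 * m + 3) → F) :
    natExt (perpMap n ℓ m α u) (ℓ + m) = natExt u (m + 2) := by
  rw [natExt_perpMap n ℓ m α u (by omega)]
  rw [if_neg (by omega), if_neg (by omega), if_pos (by omega)]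

lemma perpMap_zero_one {F : Type*} [Field F] {n ℓ m : ℕ} (hm : ℓ + m + 1 = 2 * n)
    (α : F) (u : Fin (2 * m + 3) → F) :
    natExt (perpMap n ℓ m α u) (ℓ + m + 1) = natExt u m := by
  rw [natExt_perpMap n ℓ m α u (by omega)]
  rw [if_neg (by omega), if_neg (by omega), if_neg (by omega), if_pos (by omega)]

lemma perpMap_zero_two {F : Type*} [Field F] {n ℓ m : ℕ} (hm : ℓ + m + 1 = 2 * n)
    (α : F) (u : Fin (2 * m + 3) → F) :
    natExt (perpMap n ℓ m α u) (ℓ + m + 2) = natExt u (m + 1) := by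
  rw [natExt_perpMap n ℓ m α u (by omega)]
  rw [if_neg (by omega), if_neg (by omega), if_neg (by omega), if_neg (by omega), if_pos (by omega)]

lemma perpMap_e_neg {F : Type*} [Field F] {n ℓ m : ℕ} (hm : ℓ + m + 1 = 2 * n)
    (α : F) (u : Fin (2 * m + 3) → F) :
    natExt (perpMap n ℓ m α u) (ℓ + m + 3) = α / 2 * natExt u (m + 2) := by
  rw [natExt_perpMap n ℓ m α u (by omega)]
  rw [if_neg (by omega), if_neg (by omega), if_neg (by omega), if_neg (by omega),
    if_neg (by omega), if_pos (by omega)]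

lemma perpMap_right {F : Type*} [Field F] {n ℓ m : ℕ} (hm : ℓ + m + 1 = 2 * n)
    (α : F) (u : Fin (2 * m + 3) → F) {i : ℕ}
    (hi : i < m) :
    natExt (perpMap n ℓ m α u) (ℓ + m + 4 + i) = natExt u (m + 3 + i) := by
  rw [natExt_perpMap n ℓ m α u (by omega)]
  rw [if_neg (by omega), if_neg (by omega), if_neg (by omega), if_neg (by omega),
    if_neg (by omega), if_neg (by omega),
    show ℓ + m + 4 + i - ℓ - 1 = m + 3 + i by omega]

lemma perpMap_high {F : Type*} [Field F] {n ℓ m : ℕ} (hm : ℓ + m + 1 = 2 * n)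
    (α : F) (u : Fin (2 * m + 3) → F) {k : ℕ}
    (hk : 4 * n + 1 - ℓ < k) (hk2 : k < 4 * n + 2) :
    natExt (perpMap n ℓ m α u) k = 0 := by
  rw [natExt_perpMap n ℓ m α u (by omega)]
  rw [if_neg (by omega), if_neg (by omega), if_neg (by omega), if_neg (by omega),
    if_neg (by omega), if_neg (by omega)]
  exact dif_neg (by omega)

/-! ### Isometry, injectivity and range -/

lemma perpMap_isometry {F : Type*} [Field F] (h2 : (2 : F) ≠ 0) {n ℓ m : ℕ}
    (hm : ℓ + m + 1 = 2 * n) (δ α : F) (u v : Fin (2 * m + 3) → F) :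
    bform n δ (perpMap n ℓ m α u) (perpMap n ℓ m α v) = u ⬝ᵥ (Jsmall F m δ α *ᵥ v) := by
  rw [bform_eq n δ (ℓ + m) hm, small_eq, perpMap_e hm, perpMap_e hm, perpMap_zero_one hm,
    perpMap_zero_one hm, perpMap_zero_two hm, perpMap_zero_two hm, perpMap_e_neg hm,
    perpMap_e_neg hm]
  have hleft : ∑ i ∈ Finset.range (ℓ + m), natExt (perpMap n ℓ m α u) i *
        natExt (perpMap n ℓ m α v) (4 * n + 1 - i) =
      ∑ i ∈ Finset.range m, natExt u i * natExt v (2 * m + 2 - i) := by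
    rw [Finset.sum_range_add, Finset.sum_eq_zero, zero_add]
    · refine Finset.sum_congr rfl fun i hi => ?_
      rw [Finset.mem_range] at hi
      rw [perpMap_left hm α u hi,
        show 4 * n + 1 - (ℓ + i) = ℓ + m + 4 + (m - 1 - i) by omega,
        perpMap_right hm α v (by omega), show m + 3 + (m - 1 - i) = 2 * m + 2 - i by omega]
    · intro i hi
      rw [Finset.mem_range] at hi
      rw [perpMap_low hm α u hi, zero_mul]
  have hright : ∑ i ∈ Finset.range (ℓ + m), natExt (perpMap n ℓ m α u) (ℓ + m + 4 + i) *
        natExt (perpMap n ℓ m α v) (ℓ + m - 1 - i) =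
      ∑ i ∈ Finset.range m, natExt u (m + 3 + i) * natExt v (m - 1 - i) := by
    rw [Nat.add_comm ℓ m, Finset.sum_range_add, Nat.add_comm m ℓ, add_eq_left.mpr]
    · refine Finset.sum_congr rfl fun i hi => ?_
      rw [Finset.mem_range] at hi
      rw [perpMap_right hm α u hi, show ℓ + m - 1 - i = ℓ + (m - 1 - i) by omega,
        perpMap_left hm α v (by omega)]
    · refine Finset.sum_eq_zero fun i hi => ?_
      rw [Finset.mem_range] at hi
      rw [perpMap_high hm α u (by omega) (by omega), zero_mul]
  rw [hleft, hright]
  field_simp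
  ring

lemma perpMap_injective {F : Type*} [Field F] {n ℓ m : ℕ}
    (hm : ℓ + m + 1 = 2 * n) (α : F) :
    Function.Injective (perpMap n ℓ m α) := by
  intro u v huv
  funext a
  rw [← natExt_val u, ← natExt_val v]
  have ha := a.isLt
  rcases (by omega : a.val < m ∨ a.val = m ∨ a.val = m + 1 ∨ a.val = m + 2 ∨
    m + 3 ≤ a.val) with h | h | h | h | h
  · rw [← perpMap_left hm α u h, huv, perpMap_left hm α v h]
  · rw [h, ← perpMap_zero_one hm α u, huv, perpMap_zero_one hm α v]
  · rw [h, ← perpMap_zero_two hm α u, huv, perpMap_zero_two hm α v]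
  · rw [h, ← perpMap_e hm α u, huv, perpMap_e hm α v]
  · obtain ⟨i, hi⟩ := Nat.exists_eq_add_of_le h
    rw [hi, ← perpMap_right hm α u (by omega), huv, perpMap_right hm α v (by omega)]

/-- The preimage of a vector of `y_α^⊥ ∩ W_ℓ` is read off from its coordinates: orthogonality
to `y_α` says exactly that the `e₋₂ₙ`-coordinate is `α/2` times the `e₂ₙ`-coordinate. -/
lemma range_perpMap {F : Type*} [Field F] {n ℓ m : ℕ}
    (hm : ℓ + m + 1 = 2 * n) (δ α : F) :
    Set.range (perpMap n ℓ m α) =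
      {x | x ∈ Wset F n ℓ ∧ bform n δ (yvec F n α) x = 0} := by
  ext x
  simp only [Set.mem_range, Set.mem_ofPred_eq, bform_yvec n δ α (ℓ + m) hm]
  constructor
  · rintro ⟨u, rfl⟩
    refine ⟨?_, by rw [perpMap_e hm, perpMap_e_neg hm, sub_self]⟩
    rintro k (hk | hk)
    · rw [← natExt_val (perpMap n ℓ m α u), perpMap_low hm α u hk]
    · rw [← natExt_val (perpMap n ℓ m α u), perpMap_high hm α u hk k.isLt]
  · rintro ⟨hW, hy⟩
    let u : Fin (2 * m + 3) → F := fun a =>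
      if a.val < m then natExt x (ℓ + a.val)
      else if a.val = m then natExt x (ℓ + m + 1)
      else if a.val = m + 1 then natExt x (ℓ + m + 2)
      else if a.val = m + 2 then natExt x (ℓ + m)
      else natExt x (ℓ + a.val + 1)
    have hu : ∀ k, k < 2 * m + 3 → natExt u k =
        if k < m then natExt x (ℓ + k)
        else if k = m then natExt x (ℓ + m + 1)
        else if k = m + 1 then natExt x (ℓ + m + 2)
        else if k = m + 2 then natExt x (ℓ + m)
        else natExt x (ℓ + k + 1) := by
      intro k hk
      rw [natExt_of_lt _ hk]
    refine ⟨u, ?_⟩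
    funext k
    have hk := k.isLt
    rw [← natExt_val (perpMap n ℓ m α u)]
    by_cases hlo : k.val < ℓ
    · rw [perpMap_low hm α u hlo, hW k (Or.inl hlo)]
    by_cases hhi : 4 * n + 1 - ℓ < k.val
    · rw [perpMap_high hm α u hhi hk, hW k (Or.inr hhi)]
    rw [← natExt_val x]
    obtain ⟨i, hi⟩ := Nat.exists_eq_add_of_le (not_lt.mp hlo)
    rcases (by omega : i < m ∨ i = m ∨ i = m + 1 ∨ i = m + 2 ∨ i = m + 3 ∨ m + 4 ≤ i)
      with h | h | h | h | h | h
    · rw [hi, perpMap_left hm α u h, hu i (by omega), if_pos h]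
    · rw [hi, h, perpMap_e hm, hu _ (by omega), if_neg (by omega), if_neg (by omega),
        if_neg (by omega), if_pos rfl]
    · rw [hi, h, ← add_assoc, perpMap_zero_one hm, hu _ (by omega), if_neg (by omega), if_pos rfl]
    · rw [hi, h, ← add_assoc, perpMap_zero_two hm, hu _ (by omega), if_neg (by omega),
        if_neg (by omega), if_pos rfl]
    · rw [hi, h, ← add_assoc, perpMap_e_neg hm, hu _ (by omega), if_neg (by omega),
        if_neg (by omega), if_neg (by omega), if_pos rfl]
      exact (sub_eq_zero.mp hy).symm
    · obtain ⟨j, hj⟩ := Nat.exists_eq_add_of_le h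
      rw [hi, hj, show ℓ + (m + 4 + j) = ℓ + m + 4 + j by omega,
        perpMap_right hm α u (by omega), hu _ (by omega), if_neg (by omega), if_neg (by omega),
          if_neg (by omega), if_neg (by omega),
        show ℓ + (m + 3 + j) + 1 = ℓ + m + 4 + j by omega]

/-- `⟨y_α, y_α⟩ = -α`, and the restriction of `⟨·,·⟩` to the
`(4n-2ℓ+1)`-dimensional subspace `y_α^⊥ ∩ W_ℓ` is isometric to the bilinear
space `F^{4n-2ℓ+1}` with Gram matrix `[[0,0,w_{2n-ℓ-1}],[0,J_{δ,α},0],[w_{2n-ℓ-1},0,0]]`. -/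
theorem statement5 (F : Type*) [Field F] (h2 : (2 : F) ≠ 0)
    (n : ℕ) (hn : 1 ≤ n) (δ : F) (hδ : δ ≠ 0) (hδsq : ∀ x : F, x ^ 2 ≠ -δ)
    (ℓ : ℕ) (hℓ1 : 1 ≤ ℓ) (hℓ2 : ℓ < 2 * n) (α : F) (hα : α ≠ 0) :
    bform n δ (yvec F n α) (yvec F n α) = -α ∧
    ∃ φ : (Fin (2 * (2 * n - ℓ - 1) + 3) → F) →ₗ[F] (Fin (4 * n + 2) → F),
      Function.Injective φ ∧
      Set.range φ =
        {x | x ∈ Wset F n ℓ ∧ bform n δ (yvec F n α) x = 0} ∧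
      ∀ u v : Fin (2 * (2 * n - ℓ - 1) + 3) → F,
        bform n δ (φ u) (φ v) = u ⬝ᵥ (Jsmall F (2 * n - ℓ - 1) δ α *ᵥ v) := by
  obtain ⟨m, hm⟩ : ∃ m, ℓ + m + 1 = 2 * n := ⟨2 * n - ℓ - 1, by omega⟩
  rw [show 2 * n - ℓ - 1 = m by omega]
  refine ⟨?_, perpMap n ℓ m α, perpMap_injective hm α, range_perpMap hm δ α,
    perpMap_isometry h2 hm δ α⟩
  rw [bform_yvec n δ α (ℓ + m) hm, natExt_yvec n α (by omega), natExt_yvec n α (by omega),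
    if_neg (by omega), if_pos (by omega), if_pos (by omega)]
  field_simp
  ring
end

section
/- Fix 1 ≤ ℓ ≤ 2n and w₀ ∈ W_ℓ, and let N_ℓ and χ_{ℓ,w₀} be as above. Let g ∈ SO(V) be an isometry satisfying g·e_i = e_i and g·e_{−i} = e_{−i} for all 1 ≤ i ≤ ℓ, g(W_ℓ) = W_ℓ, and g·w₀ = w₀. Then g N_ℓ g^{−1} = N_ℓ and χ_{ℓ,w₀}(g u g^{−1}) = χ_{ℓ,w₀}(u) for all u ∈ N_ℓ; i.e., the character χ_{ℓ,w₀} is invariant under conjugation by the stabilizer of w₀ in SO(W_ℓ). -/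
/-!
The isometry `g` is the identity on `V_ℓ⁺` and on `e₋₁, …, e₋ℓ`, and it maps `W_ℓ` onto itself; the
same holds for `g⁻¹`. For `x ∈ Vᵢ⁺` with `i ≤ ℓ` this gives
`g u g⁻¹ x - x = g (u x - x) = u x - x ∈ V_{i-1}⁺`, and for `w ∈ W_ℓ` it gives
`g u g⁻¹ w - w = g (u w' - w') = u w' - w' ∈ V_ℓ⁺` with `w' = g⁻¹ w ∈ W_ℓ`, so conjugation by `g`
maps `N_ℓ` into itself (`conj_mem_NlSet`). Applied to `g⁻¹`, this gives surjectivity.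

Every term of `χ_{ℓ,w₀}` has the form `⟨u x, y⟩` with `g x = x` and `g y = y`, hence is unchanged
by conjugation (`bform_conj`): `⟨g u g⁻¹ x, y⟩ = ⟨g (u x), g y⟩ = ⟨u x, y⟩`.
-/

open Matrix
open Matrix

/-- The standard basis vector of `V = F^{4n+2}` at 0-based index `i`; thus
`eᵢ = evec F n (i-1)` for `1 ≤ i ≤ 2n`, `e₀⁽¹⁾ = evec F n (2n)`,
`e₀⁽²⁾ = evec F n (2n+1)`, and `e₋ⱼ = evec F n (4n+2-j)` for `1 ≤ j ≤ 2n`. -/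
def evec (F : Type*) [Field F] (n i : ℕ) : Fin (4 * n + 2) → F :=
  fun k => if k.val = i then 1 else 0

/-- `SO(V)`: the group of linear isometries of `(V, ⟨·,·⟩)` of determinant 1. -/
def SOset (F : Type*) [Field F] (n : ℕ) (δ : F) :
    Set ((Fin (4 * n + 2) → F) ≃ₗ[F] (Fin (4 * n + 2) → F)) :=
  {g | (∀ x y, bform n δ (g x) (g y) = bform n δ x y) ∧
    LinearMap.det (g : (Fin (4 * n + 2) → F) →ₗ[F] (Fin (4 * n + 2) → F)) = 1}

/-- `Vᵢ⁺ = span(e₁, …, eᵢ)`: vectors supported on 0-based coordinates `< i`. -/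
def VplusSet (F : Type*) [Field F] (n i : ℕ) : Set (Fin (4 * n + 2) → F) :=
  {x | ∀ k : Fin (4 * n + 2), i ≤ k.val → x k = 0}

/-- The group `N_ℓ = {u ∈ SO(V) : (u-1)(Vᵢ⁺) ⊆ V_{i-1}⁺ for 1 ≤ i ≤ ℓ, and
(u-1)(W_ℓ) ⊆ V_ℓ⁺}`. -/
def NlSet (F : Type*) [Field F] (n : ℕ) (δ : F) (ℓ : ℕ) :
    Set ((Fin (4 * n + 2) → F) ≃ₗ[F] (Fin (4 * n + 2) → F)) :=
  {u | u ∈ SOset F n δ ∧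
    (∀ i : ℕ, 1 ≤ i → i ≤ ℓ → ∀ x ∈ VplusSet F n i,
      (u x - x) ∈ VplusSet F n (i - 1)) ∧
    (∀ w ∈ Wset F n ℓ, (u w - w) ∈ VplusSet F n ℓ)}

/-- `χ_{ℓ,w₀}(u) = Σ_{i=2}^{ℓ} ⟨u eᵢ, e₋₍ᵢ₋₁₎⟩ + ⟨u w₀, e₋ℓ⟩`. -/
def chiMap {F : Type*} [Field F] (n : ℕ) (δ : F) (ℓ : ℕ)
    (w₀ : Fin (4 * n + 2) → F)
    (u : (Fin (4 * n + 2) → F) ≃ₗ[F] (Fin (4 * n + 2) → F)) : F :=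
  (∑ i ∈ Finset.Icc 2 ℓ,
    bform n δ (u (evec F n (i - 1))) (evec F n (4 * n + 3 - i))) +
    bform n δ (u w₀) (evec F n (4 * n + 2 - ℓ))

section Helpers

variable {F : Type*} [Field F] {n : ℕ} {δ : F} {ℓ : ℕ}
  {g u : (Fin (4 * n + 2) → F) ≃ₗ[F] (Fin (4 * n + 2) → F)}

lemma SOset_mul (hg : g ∈ SOset F n δ) (hu : u ∈ SOset F n δ) : g * u ∈ SOset F n δ := by
  refine ⟨fun x y => ?_, ?_⟩
  · rw [LinearEquiv.mul_apply, LinearEquiv.mul_apply, hg.1, hu.1]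
  · have h : ((g * u : (Fin (4 * n + 2) → F) ≃ₗ[F] (Fin (4 * n + 2) → F)) :
        (Fin (4 * n + 2) → F) →ₗ[F] (Fin (4 * n + 2) → F)) =
        (g : (Fin (4 * n + 2) → F) →ₗ[F] (Fin (4 * n + 2) → F)) ∘ₗ
          (u : (Fin (4 * n + 2) → F) →ₗ[F] (Fin (4 * n + 2) → F)) := rfl
    rw [h, LinearMap.det_comp, hg.2, hu.2, one_mul]

lemma apply_inv_apply (g : (Fin (4 * n + 2) → F) ≃ₗ[F] (Fin (4 * n + 2) → F))
    (x : Fin (4 * n + 2) → F) : g (g⁻¹ x) = x :=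
  g.apply_symm_apply x

lemma inv_apply_eq_self {x : Fin (4 * n + 2) → F} (h : g x = x) : g⁻¹ x = x :=
  g.injective (by rw [apply_inv_apply, h])

lemma SOset_inv (hg : g ∈ SOset F n δ) : g⁻¹ ∈ SOset F n δ := by
  refine ⟨fun x y => ?_, ?_⟩
  · rw [← hg.1, apply_inv_apply, apply_inv_apply]
  · have h := LinearEquiv.det_mul_det_symm g
    rw [hg.2, one_mul] at h
    exact h

lemma VplusSet_mono {i j : ℕ} (hij : i ≤ j) : VplusSet F n i ⊆ VplusSet F n j :=
  fun _ hx k hk => hx k (hij.trans hk)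

lemma apply_eq_self_of_mem_VplusSet
    (hg : ∀ i, i < ℓ → g (evec F n i) = evec F n i)
    {x : Fin (4 * n + 2) → F} (hx : x ∈ VplusSet F n ℓ) : g x = x := by
  have hsum : x = ∑ k : Fin (4 * n + 2), x k • evec F n k.val := by
    funext j
    simp [evec, Fin.val_inj]
  conv_lhs => rw [hsum]
  conv_rhs => rw [hsum]
  rw [map_sum]
  refine Finset.sum_congr rfl fun k _ => ?_
  rw [map_smul]
  rcases lt_or_ge k.val ℓ with hk | hk
  · rw [hg _ hk]
  · rw [hx k hk, zero_smul, zero_smul]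

/-- Conjugation by an element of `SO(V)` that fixes `V_ℓ⁺` pointwise and whose inverse maps `W_ℓ`
into itself maps `N_ℓ` into itself. -/
lemma conj_mem_NlSet (hg : g ∈ SOset F n δ)
    (hV : ∀ x ∈ VplusSet F n ℓ, g x = x) (hW : ∀ w ∈ Wset F n ℓ, g⁻¹ w ∈ Wset F n ℓ)
    (hu : u ∈ NlSet F n δ ℓ) : g * u * g⁻¹ ∈ NlSet F n δ ℓ := by
  obtain ⟨huSO, huV, huW⟩ := hu
  have key : ∀ x, (g * u * g⁻¹) x - x = g (u (g⁻¹ x) - g⁻¹ x) := fun x => by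
    rw [map_sub, apply_inv_apply]; rfl
  refine ⟨SOset_mul (SOset_mul hg huSO) (SOset_inv hg), fun i hi hiℓ x hx => ?_, fun w hw => ?_⟩
  · have h := huV i hi hiℓ x hx
    rw [key, inv_apply_eq_self (hV x (VplusSet_mono hiℓ hx)),
      hV _ (VplusSet_mono (by omega) h)]
    exact h
  · have h := huW _ (hW w hw)
    rw [key, hV _ h]
    exact h

/-- Matrix coefficients of `u` between vectors fixed by the isometry `g` do not change when `u` is
conjugated by `g`. -/
lemma bform_conj (hg : g ∈ SOset F n δ) {x y : Fin (4 * n + 2) → F}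
    (hx : g x = x) (hy : g y = y) : bform n δ ((g * u * g⁻¹) x) y = bform n δ (u x) y := by
  rw [LinearEquiv.mul_apply, LinearEquiv.mul_apply, inv_apply_eq_self hx]
  conv_lhs => rw [← hy]
  exact hg.1 _ _

end Helpers

/-- If `g ∈ SO(V)` fixes `e₁, …, e_ℓ, e₋₁, …, e₋ℓ`, preserves
`W_ℓ`, and fixes `w₀ ∈ W_ℓ`, then conjugation by `g` preserves `N_ℓ`
(`g N_ℓ g⁻¹ = N_ℓ`) and leaves the character `χ_{ℓ,w₀}` invariant:
`χ_{ℓ,w₀}(g u g⁻¹) = χ_{ℓ,w₀}(u)` for all `u ∈ N_ℓ`. -/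
theorem statement8 (F : Type*) [Field F] (h2 : (2 : F) ≠ 0)
    (n : ℕ) (hn : 1 ≤ n) (δ : F) (hδ : δ ≠ 0) (hδsq : ∀ x : F, x ^ 2 ≠ -δ)
    (ℓ : ℕ) (hℓ1 : 1 ≤ ℓ) (hℓ2 : ℓ ≤ 2 * n)
    (w₀ : Fin (4 * n + 2) → F) (hw₀ : w₀ ∈ Wset F n ℓ)
    (g : (Fin (4 * n + 2) → F) ≃ₗ[F] (Fin (4 * n + 2) → F))
    (hgSO : g ∈ SOset F n δ)
    (hgfix : ∀ i : ℕ, 1 ≤ i → i ≤ ℓ →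
      g (evec F n (i - 1)) = evec F n (i - 1) ∧
      g (evec F n (4 * n + 2 - i)) = evec F n (4 * n + 2 - i))
    (hgW : (fun x => g x) '' Wset F n ℓ = Wset F n ℓ)
    (hgw₀ : g w₀ = w₀) :
    (∀ u ∈ NlSet F n δ ℓ,
      g * u * g⁻¹ ∈ NlSet F n δ ℓ ∧
      chiMap n δ ℓ w₀ (g * u * g⁻¹) = chiMap n δ ℓ w₀ u) ∧
    (∀ v ∈ NlSet F n δ ℓ, ∃ u ∈ NlSet F n δ ℓ, v = g * u * g⁻¹) := by
  have hV : ∀ x ∈ VplusSet F n ℓ, g x = x := fun x hx =>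
    apply_eq_self_of_mem_VplusSet (fun i hi => (hgfix (i + 1) (by omega) (by omega)).1) hx
  have hWfwd : ∀ w ∈ Wset F n ℓ, g w ∈ Wset F n ℓ := fun w hw => by
    rw [← hgW]
    exact ⟨w, hw, rfl⟩
  have hWinv : ∀ w ∈ Wset F n ℓ, g⁻¹ w ∈ Wset F n ℓ := fun w hw => by
    rw [← hgW] at hw
    obtain ⟨w', hw', rfl⟩ := hw
    have h : g⁻¹ (g w') = w' := g.symm_apply_apply w'
    simpa only [h] using hw'
  refine ⟨fun u hu => ⟨conj_mem_NlSet hgSO hV hWinv hu, ?_⟩, fun v hv => ?_⟩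
  · unfold chiMap
    congr 1
    · refine Finset.sum_congr rfl fun i hi => ?_
      rw [Finset.mem_Icc] at hi
      -- `e₋₍ᵢ₋₁₎` has index `4n + 3 - i = 4n + 2 - (i - 1)`, and `1 ≤ i - 1 ≤ ℓ`.
      have hy := (hgfix (i - 1) (by omega) (by omega)).2
      rw [show 4 * n + 2 - (i - 1) = 4 * n + 3 - i by omega] at hy
      exact bform_conj hgSO (hgfix i (by omega) hi.2).1 hy
    · exact bform_conj hgSO hgw₀ (hgfix ℓ hℓ1 le_rfl).2
  · refine ⟨g⁻¹ * v * g⁻¹⁻¹, conj_mem_NlSet (SOset_inv hgSO)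
      (fun x hx => inv_apply_eq_self (hV x hx)) (fun w hw => ?_) hv, by group⟩
    rw [inv_inv]
    exact hWfwd w hw
end

section
/- Let x, y ∈ F with x² + δ y² ≠ 0. Then the quaternion algebra D_{δ,α} = (−δ, −α / F) is isomorphic as an F-algebra to D_{δ, α(x²+δy²)} = (−δ, −α(x²+δy²) / F). In particular, the isomorphism class of the quaternion algebra D_{δ,α} depends only on the coset of α in F^× / Nm(F(√−δ)^×). -/
/-!
Left multiplication of `j` by an element `x + y i` of the subfield `F(i)` produces another element
anticommuting with `i`, whose square is `j²` times the norm of `x + y i`. Hence `i` and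
`(x + y i) j` satisfy the relations of the quaternion algebra with the second parameter scaled by
that norm, which gives a homomorphism out of it. Since `(x + y i)⁻¹` undoes the substitution,
the homomorphisms attached to `x + y i` and `(x + y i)⁻¹` are mutually inverse.
-/

open Quaternion

/-- The elements `i` and `(x + y i) j` of `ℍ[F, a, b]`, as a quaternion basis with parameters
`a` and `b' = b (x² - a y²)`. The parameter `b'` is kept separate, tied by an equation, so that
the basis can be used for any syntactic form of it. -/
def twistedBasis {F : Type*} [Field F] (a b b' x y : F) (h : b' = b * (x ^ 2 - a * y ^ 2)) :
    QuaternionAlgebra.Basis ℍ[F, a, b] a 0 b' where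
  i := ⟨0, 1, 0, 0⟩
  j := ⟨0, 0, x, y⟩
  k := ⟨0, 0, a * y, x⟩
  i_mul_i := by ext <;> simp
  j_mul_j := by
    subst h
    ext <;> simp <;> ring
  i_mul_j := by ext <;> simp
  j_mul_i := by ext <;> simp [mul_comm]

/-- If `x² + δy² ≠ 0`, then the quaternion algebras
`D_{δ,α} = (-δ, -α / F)` and `D_{δ, α(x²+δy²)} = (-δ, -α(x²+δy²) / F)` are
isomorphic as `F`-algebras; in particular the isomorphism class of `D_{δ,α}`
depends only on the class of `α` in `F^× / Nm(F(√-δ)^×)`. -/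
theorem statement9 (F : Type*) [Field F] (h2 : (2 : F) ≠ 0)
    (δ α : F) (hδ : δ ≠ 0) (hα : α ≠ 0) (hδsq : ∀ z : F, z ^ 2 ≠ -δ)
    (x y : F) (hxy : x ^ 2 + δ * y ^ 2 ≠ 0) :
    Nonempty (ℍ[F, -δ, -α] ≃ₐ[F] ℍ[F, -δ, -(α * (x ^ 2 + δ * y ^ 2))]) := by
  obtain ⟨N, hN⟩ : ∃ N, N = x ^ 2 + δ * y ^ 2 := ⟨_, rfl⟩
  rw [← hN] at hxy ⊢
  -- The coefficients `x / N` and `-y / N` are those of `(x + y i)⁻¹`.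
  have hinv : -α = -(α * N) * ((x / N) ^ 2 - -δ * (-y / N) ^ 2) := by
    field_simp
    rw [hN]
    ring
  have hmul : -(α * N) = -α * (x ^ 2 - -δ * y ^ 2) := by
    rw [hN]
    ring
  refine ⟨AlgEquiv.ofAlgHom (twistedBasis _ _ _ _ _ hinv).liftHom
    (twistedBasis _ _ _ _ _ hmul).liftHom ?_ ?_⟩
  all_goals
    apply QuaternionAlgebra.hom_ext
    · ext <;> simp [QuaternionAlgebra.Basis.lift, twistedBasis]
    · ext <;> simp [QuaternionAlgebra.Basis.lift, twistedBasis] <;> field_simp <;>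
        first | ring1 | linear_combination -hN
end

section
/- Let J₆ be the 6×6 block matrix [[0, 0, w₂], [0, J_δ, 0], [w₂, 0, 0]] with J_δ = diag(1, δ) and w₂ the 2×2 anti-diagonal matrix of 1's, and let ε ∈ GL₆(F) be the matrix determined on the standard basis by ε e₁ = e₅, ε e₂ = e₁, ε e₃ = e₃, ε e₄ = −e₄, ε e₅ = e₆, ε e₆ = e₂. Then εᵀ J₆ ε = J₆ and det ε = 1, so ε ∈ SO(J₆); moreover, for every 2×2 matrix g with gᵀ J_δ g = J_δ and det g = 1, setting ĝ = diag(I₂, g, I₂) ∈ SO(J₆), one has ε ĝ ε^{−1} = ĝ^{−1}. In other words, the adjoint action of ε on the embedded subgroup SO(J_δ) of the Levi subgroup is the inversion. -/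
/-!
On the middle block `ε` acts as `diag(1, -1)`, and off that block it permutes the coordinates on
which `ĝ` is trivial. Conjugating `g = !![a, b; c, d]` by `diag(1, -1)` negates the off-diagonal
entries, whereas `g⁻¹ = !![d, -b; -c, a]` when `det g = 1`; the two agree because the diagonal
entries of an element of `SO(J_δ)` coincide (`diag_entries_eq`). As `ε` is a signed permutation
matrix, `ε⁻¹ = εᵀ`, and its determinant is that of a 4-cycle times `-1`.
-/

open Matrix

/-- The 6×6 Gram matrix `J₆ = [[0,0,w₂],[0,J_δ,0],[w₂,0,0]]` with
`J_δ = diag(1, δ)`. -/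
def J6 (F : Type*) [Field F] (δ : F) : Matrix (Fin 6) (Fin 6) F :=
  Matrix.of fun i j =>
    if i.val = 2 then (if j = i then (1 : F) else 0)
    else if i.val = 3 then (if j = i then δ else 0)
    else if i.val + j.val = 5 then 1 else 0

/-- The Weyl-type element `ε` with `ε e₁ = e₅`, `ε e₂ = e₁`, `ε e₃ = e₃`,
`ε e₄ = -e₄`, `ε e₅ = e₆`, `ε e₆ = e₂`. -/
def epsMat (F : Type*) [Field F] : Matrix (Fin 6) (Fin 6) F :=
  !![0, 1, 0, 0, 0, 0;
     0, 0, 0, 0, 0, 1;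
     0, 0, 1, 0, 0, 0;
     0, 0, 0, -1, 0, 0;
     1, 0, 0, 0, 0, 0;
     0, 0, 0, 0, 1, 0]

/-- The embedding `g ↦ ĝ = diag(I₂, g, I₂)` of 2×2 matrices into 6×6
matrices. -/
def ghat (F : Type*) [Field F] (g : Matrix (Fin 2) (Fin 2) F) :
    Matrix (Fin 6) (Fin 6) F :=
  Matrix.of fun i j =>
    if hi : 2 ≤ i.val ∧ i.val ≤ 3 then
      if hj : 2 ≤ j.val ∧ j.val ≤ 3 then
        g ⟨i.val - 2, by omega⟩ ⟨j.val - 2, by omega⟩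
      else 0
    else if i = j then 1 else 0

theorem epsMat_inv (F : Type*) [Field F] : (epsMat F)⁻¹ = (epsMat F)ᵀ := by
  apply Matrix.inv_eq_left_inv
  ext i j
  fin_cases i <;> fin_cases j <;>
    simp [epsMat, Matrix.mul_apply, Fin.sum_univ_succ]

theorem diag_entries_eq {F : Type*} [Field F] {δ : F} {g : Matrix (Fin 2) (Fin 2) F}
    (hg : gᵀ * Matrix.diagonal ![1, δ] * g = Matrix.diagonal ![1, δ]) (hdet : g.det = 1) :
    g 0 0 = g 1 1 := by
  have h00 := congrFun (congrFun hg 0) 0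
  have h01 := congrFun (congrFun hg 0) 1
  simp [Matrix.mul_apply, Fin.sum_univ_two, Matrix.diagonal] at h00 h01
  rw [Matrix.det_fin_two] at hdet
  -- `a = a (ad - bc) = a² d - (ab) c = (a² + δ c²) d = d`
  linear_combination (-g 0 0) * hdet - g 1 0 * h01 + g 1 1 * h00

theorem ghat_eq (F : Type*) [Field F] (g : Matrix (Fin 2) (Fin 2) F) :
    ghat F g = !![1, 0, 0, 0, 0, 0;
                  0, 1, 0, 0, 0, 0;
                  0, 0, g 0 0, g 0 1, 0, 0;
                  0, 0, g 1 0, g 1 1, 0, 0;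
                  0, 0, 0, 0, 1, 0;
                  0, 0, 0, 0, 0, 1] := by
  ext i j
  fin_cases i <;> fin_cases j <;> simp [ghat]

theorem ghat_one (F : Type*) [Field F] : ghat F 1 = 1 := by
  rw [ghat_eq]
  ext i j
  fin_cases i <;> fin_cases j <;> simp

theorem ghat_mul (F : Type*) [Field F] (g h : Matrix (Fin 2) (Fin 2) F) :
    ghat F g * ghat F h = ghat F (g * h) := by
  simp only [ghat_eq]
  ext i j
  fin_cases i <;> fin_cases j <;>
    simp [Matrix.mul_apply, Fin.sum_univ_succ]

/-- Conjugation by `ε` negates the off-diagonal entries of the middle block. -/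
theorem eps_conj_ghat (F : Type*) [Field F] (g : Matrix (Fin 2) (Fin 2) F) :
    epsMat F * ghat F g * (epsMat F)ᵀ = ghat F !![g 0 0, -g 0 1; -g 1 0, g 1 1] := by
  rw [ghat_eq, ghat_eq]
  ext i j
  fin_cases i <;> fin_cases j <;>
    simp [epsMat, Matrix.mul_apply, Fin.sum_univ_succ]

/-- `ε ∈ SO(J₆)`, and for every `g ∈ SO(J_δ)` (with
`J_δ = diag(1,δ)`), the adjoint action of `ε` on the embedded element
`ĝ = diag(I₂, g, I₂)` is the inversion: `ε ĝ ε⁻¹ = ĝ⁻¹`. -/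
theorem statement12 (F : Type*) [Field F] (h2 : (2 : F) ≠ 0)
    (δ : F) (hδ : δ ≠ 0) (hδsq : ∀ x : F, x ^ 2 ≠ -δ) :
    (epsMat F)ᵀ * J6 F δ * epsMat F = J6 F δ ∧
    (epsMat F).det = 1 ∧
    ∀ g : Matrix (Fin 2) (Fin 2) F,
      gᵀ * Matrix.diagonal ![1, δ] * g = Matrix.diagonal ![1, δ] →
      g.det = 1 →
      epsMat F * ghat F g * (epsMat F)⁻¹ = (ghat F g)⁻¹ := by
  refine ⟨?_, ?_, ?_⟩
  · ext i j
    fin_cases i <;> fin_cases j <;>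
      simp [epsMat, J6, Matrix.mul_apply, Fin.sum_univ_succ]
  · simp [epsMat, Matrix.det_succ_row_zero, Fin.sum_univ_succ, Fin.succAbove]
    norm_num
  · intro g hg hdet
    have had := diag_entries_eq hg hdet
    rw [Matrix.det_fin_two] at hdet
    rw [epsMat_inv, eps_conj_ghat]
    symm
    apply Matrix.inv_eq_left_inv
    rw [ghat_mul, ← ghat_one]
    congr 1
    ext i j
    fin_cases i <;> fin_cases j <;> simp [Matrix.mul_apply, Fin.sum_univ_two] <;> grind
end
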